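/- Let E be a real Hilbert space, G ⊆ E a closed subspace with orthogonal complement G^⊥, and Ψ: E → ℝ a continuous functional such that for every g ∈ G the map h′ ↦ Ψ(g + h′) is convex on G^⊥. Let h: G → G^⊥ be a continuous map such that Ψ(g + h(g)) ≤ Ψ(g + h′) for all g ∈ G and h′ ∈ G^⊥. For κ ∈ ℝ set Λ^κ = {u ∈ E : Ψ(u) ≤ κ} and Λ̃^κ = {g ∈ G : Ψ(g + h(g)) ≤ κ}. Then the set {g + h(g) : g ∈ Λ̃^κ} is a strong deformation retract of Λ^κ (via the straight-line homotopy in the G^⊥-component), and in particular the embedding g ↦ g + h(g) from Λ̃^κ into Λ^κ is a homotopy equivalence. -/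

import Mathlib

/-- Part (iv) of the finite-dimensional reduction (Lemma 2.10): the set
`{g + h g : g ∈ Λ̃^κ}` is a strong deformation retract of the sublevel set
`Λ^κ = {Ψ ≤ κ}` via the straight-line homotopy in the `G^⊥`-component, and in
particular the embedding `g ↦ g + h g` of `Λ̃^κ` into `Λ^κ` is a homotopy
equivalence. -/
theorem sublevel_deformation_retract
    (E : Type*) [NormedAddCommGroup E] [InnerProductSpace ℝ E]
    (G : Submodule ℝ E) [Submodule.HasOrthogonalProjection G]
    (Ψ : E → ℝ) (hΨ : Continuous Ψ)
    (hconvex : ∀ g ∈ G, ConvexOn ℝ (Gᗮ : Set E) (fun h' => Ψ (g + h')))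
    (h : E → E) (hmem : ∀ g ∈ G, h g ∈ Gᗮ)
    (hcont : ContinuousOn h (G : Set E))
    (hmin : ∀ g ∈ G, ∀ h' ∈ Gᗮ, Ψ (g + h g) ≤ Ψ (g + h'))
    (κ : ℝ) :
    ∀ (Λ Λt A : Set E) (ret : ℝ → E → E),
      Λ = {u : E | Ψ u ≤ κ} →
      Λt = {g : E | g ∈ G ∧ Ψ (g + h g) ≤ κ} →
      A = (fun g => g + h g) '' Λt →
      (∀ (s : ℝ) (u : E), ret s u =
        (Submodule.orthogonalProjectionOnto G u : E)
          + (1 - s) • (u - (Submodule.orthogonalProjectionOnto G u : E))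
          + s • h (Submodule.orthogonalProjectionOnto G u)) →
      -- strong deformation retract onto `A` via the straight-line homotopy
      ((∀ u : E, ret 0 u = u) ∧
       (∀ u ∈ Λ, ret 1 u ∈ A) ∧
       (∀ s ∈ Set.Icc (0:ℝ) 1, ∀ u ∈ Λ, ret s u ∈ Λ) ∧
       (∀ a ∈ A, ∀ s ∈ Set.Icc (0:ℝ) 1, ret s a = a) ∧
       ContinuousOn (fun p : ℝ × E => ret p.1 p.2) (Set.Icc (0:ℝ) 1 ×ˢ Λ) ∧
       -- in particular the embedding `g ↦ g + h g` is a homotopy equivalence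
       ∃ e : C(Λt, Λ), (∀ g : Λt, (e g : E) = (g : E) + h (g : E)) ∧
         ∃ f : C(Λ, Λt),
           ContinuousMap.Homotopic (e.comp f) (ContinuousMap.id _) ∧
           ContinuousMap.Homotopic (f.comp e) (ContinuousMap.id _)) := by
  intro Λ Λt A ret hΛ hΛt hA hret
  obtain ⟨P, hPdef⟩ : ∃ P : E → E, P = fun u => (Submodule.orthogonalProjectionOnto G u : E) :=
    ⟨_, rfl⟩
  have hret' : ∀ (s : ℝ) (u : E), ret s u = P u + (1 - s) • (u - P u) + s • h (P u) := by
    intro s u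
    rw [hret, hPdef]
  have hPm : ∀ u, P u ∈ G := by
    intro u
    rw [hPdef]
    exact Submodule.coe_mem _
  have hQ : ∀ u, u - P u ∈ Gᗮ := by
    intro u
    rw [hPdef]
    exact Submodule.sub_starProjection_mem_orthogonal u
  have hPc : Continuous P := by
    rw [hPdef]
    fun_prop
  have hhP : Continuous fun u => h (P u) := hcont.comp_continuous hPc hPm
  have hPadd : ∀ g ∈ G, ∀ k ∈ Gᗮ, P (g + k) = g := by
    intro g hg k hk
    have h1 := hQ (g + k)
    have h2 : g - P (g + k) ∈ Gᗮ := by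
      have := Submodule.sub_mem _ h1 hk
      have e : g + k - P (g + k) - k = g - P (g + k) := by abel
      rwa [e] at this
    have h3 : g - P (g + k) ∈ G := Submodule.sub_mem _ hg (hPm _)
    have h4 : g - P (g + k) = 0 := by
      have := (Submodule.mem_orthogonal G _).1 h2 _ h3
      exact inner_self_eq_zero.1 this
    exact (sub_eq_zero.1 h4).symm
  have hle : ∀ u, Ψ (P u + h (P u)) ≤ Ψ u := by
    intro u
    have := hmin (P u) (hPm u) (u - P u) (hQ u)
    rwa [add_sub_cancel] at this
  have hretc : Continuous fun p : ℝ × E => ret p.1 p.2 := by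
    simp only [hret']
    have h1 : Continuous fun p : ℝ × E => P p.2 := hPc.comp continuous_snd
    have h2 : Continuous fun p : ℝ × E => h (P p.2) := hhP.comp continuous_snd
    exact (h1.add ((continuous_const.sub continuous_fst).smul (continuous_snd.sub h1))).add
      (continuous_fst.smul h2)
  have hr0 : ∀ u : E, ret 0 u = u := by
    intro u
    rw [hret']
    simp
  have hr1 : ∀ u : E, ret 1 u = P u + h (P u) := by
    intro u
    rw [hret']
    simp
  have hPt : ∀ u ∈ Λ, P u ∈ Λt := by
    intro u hu
    rw [hΛ] at hu
    rw [hΛt]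
    exact ⟨hPm u, (hle u).trans hu⟩
  have hrΛ : ∀ s ∈ Set.Icc (0:ℝ) 1, ∀ u ∈ Λ, ret s u ∈ Λ := by
    intro s hs u hu
    rw [hΛ] at hu ⊢
    have hu' : Ψ u ≤ κ := hu
    change Ψ (ret s u) ≤ κ
    have hc := (hconvex (P u) (hPm u)).2 (hQ u) (hmem _ (hPm u))
      (sub_nonneg.2 hs.2) hs.1 (by ring)
    simp only [add_sub_cancel, smul_eq_mul, ← add_assoc] at hc
    rw [hret']
    have h1 := hle u
    have h2 := mul_le_mul_of_nonneg_left (h1.trans hu') hs.1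
    have h3 := mul_le_mul_of_nonneg_left hu' (sub_nonneg.2 hs.2)
    linarith
  have heΛ : ∀ g ∈ Λt, g + h g ∈ Λ := by
    intro g hg
    rw [hΛt] at hg
    rw [hΛ]
    exact hg.2
  have hΛtG : ∀ g ∈ Λt, g ∈ G := by
    intro g hg
    rw [hΛt] at hg
    exact hg.1
  refine ⟨hr0, ?_, hrΛ, ?_, hretc.continuousOn, ?_⟩
  · intro u hu
    rw [hA, hr1]
    exact ⟨P u, hPt u hu, rfl⟩
  · intro a ha s _
    rw [hA] at ha
    obtain ⟨g, hg, rfl⟩ := ha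
    have hgG := hΛtG g hg
    simp only [hret', hPadd g hgG _ (hmem g hgG), add_sub_cancel_left]
    module
  · have hce : Continuous fun g : Λt => (g : E) + h (g : E) :=
      continuous_subtype_val.add
        (hcont.comp_continuous continuous_subtype_val fun g => hΛtG g g.2)
    refine ⟨⟨fun g => ⟨(g : E) + h (g : E), heΛ g g.2⟩, hce.subtype_mk _⟩, fun _ => rfl,
      ⟨fun u => ⟨P u, hPt u u.2⟩, (hPc.comp continuous_subtype_val).subtype_mk _⟩, ?_, ?_⟩
    · refine ContinuousMap.Homotopic.symm ⟨⟨⟨fun p => ⟨ret (p.1 : ℝ) (p.2 : E),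
        hrΛ _ p.1.2 _ p.2.2⟩, ?_⟩, ?_, ?_⟩⟩
      · refine Continuous.subtype_mk ?_ _
        exact hretc.comp (by fun_prop :
          Continuous fun p : unitInterval × Λ => ((p.1 : ℝ), (p.2 : E)))
      · intro u
        exact Subtype.ext (hr0 u)
      · intro u
        exact Subtype.ext (hr1 u)
    · convert ContinuousMap.Homotopic.refl _ using 1
      ext g
      exact (hPadd g (hΛtG g g.2) _ (hmem g (hΛtG g g.2))).symm
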